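/- Fix m ≥ 1, a nonconstant cyclic word Ω : ℤ/mℤ → Bool, and the associated angles x_i, y_i, z_i, closed polytope P̄, and total volume functional V. Suppose w ∈ P̄ maximizes V over P̄. Then for every i ∈ ℤ/mℤ, if at least one of x_i, y_i, z_i equals 0 (layer i is flat), then i is a hinge index and w(i) = 0. -/

import Mathlib

open Real

/-- `i` is a hinge index iff the letters (`false` = `L`, `true` = `R`) just before and
just after layer `i` differ. -/
def IsHinge {m : ℕ} (Ω : ZMod m → Bool) (i : ZMod m) : Prop := Ω (i - 1) ≠ Ω i

/-- The dihedral angle `x_i` of layer `i`, determined by the parameters `w` and the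
letters of the cyclic word `Ω` (`false` = `L`, `true` = `R`). -/
noncomputable def xAng {m : ℕ} (Ω : ZMod m → Bool) (w : ZMod m → ℝ) (i : ZMod m) : ℝ :=
  if Ω (i - 1) = Ω i then
    if Ω i = false then w (i - 1) + w (i + 1) else -w (i - 1) + 2 * w i - w (i + 1)
  else
    if Ω (i - 1) = false then w (i - 1) + w i - w (i + 1)
    else -w (i - 1) + w i + w (i + 1)

/-- The dihedral angle `y_i` of layer `i`. -/
noncomputable def yAng {m : ℕ} (Ω : ZMod m → Bool) (w : ZMod m → ℝ) (i : ZMod m) : ℝ :=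
  if Ω (i - 1) = Ω i then
    if Ω i = false then -w (i - 1) + 2 * w i - w (i + 1) else w (i - 1) + w (i + 1)
  else
    if Ω (i - 1) = false then -w (i - 1) + w i + w (i + 1)
    else w (i - 1) + w i - w (i + 1)

/-- The dihedral angle `z_i := π − 2 w i` of layer `i`. -/
noncomputable def zAng {m : ℕ} (w : ZMod m → ℝ) (i : ZMod m) : ℝ := π - 2 * w i

/-- The closed polytope `P̄` of weak angle structures: range, concavity and hinge
conditions with weak inequalities. -/
def Pbar (m : ℕ) (Ω : ZMod m → Bool) : Set (ZMod m → ℝ) :=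
  {w | (∀ i, 0 ≤ w i ∧ w i ≤ π / 2) ∧
       (∀ i, ¬IsHinge Ω i → w (i - 1) + w (i + 1) ≤ 2 * w i) ∧
       (∀ i, IsHinge Ω i → |w (i + 1) - w (i - 1)| ≤ w i)}

/-- The Lobachevsky-type integral `∫₀ˣ log(2 sin u) du`. -/
noncomputable def lob (x : ℝ) : ℝ := ∫ u in (0:ℝ)..x, Real.log (2 * Real.sin u)

/-- The volume `𝒱(x,y,z)` of the ideal tetrahedron with dihedral angles `x, y, z`. -/
noncomputable def idealVol (x y z : ℝ) : ℝ := -lob x - lob y - lob z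

/-- The total volume functional `V(w) = Σᵢ 𝒱(xᵢ, yᵢ, zᵢ)`. -/
noncomputable def totalVol (m : ℕ) [NeZero m] (Ω : ZMod m → Bool) (w : ZMod m → ℝ) : ℝ :=
  ∑ i : ZMod m, idealVol (xAng Ω w i) (yAng Ω w i) (zAng w i)

open Filter Topology

lemma lob_intInt (a b : ℝ) : IntervalIntegrable (fun u => Real.log (2 * Real.sin u)) MeasureTheory.volume a b := by
  apply MeromorphicOn.intervalIntegrable_log
  intro x _
  apply AnalyticAt.meromorphicAt
  fun_prop

lemma lob_cont : Continuous lob :=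
  intervalIntegral.continuous_primitive (fun a b => lob_intInt a b) 0

lemma lob_deriv {x : ℝ} (h0 : 0 < x) (h1 : x < π) :
    HasDerivAt lob (Real.log (2 * Real.sin x)) x := by
  have hs := Real.sin_pos_of_pos_of_lt_pi h0 h1
  apply intervalIntegral.integral_hasDerivAt_right (lob_intInt 0 x)
  · exact (Measurable.stronglyMeasurable (by fun_prop)).stronglyMeasurableAtFilter
  · apply ContinuousAt.log (by fun_prop) (by positivity)

/-- derivative of one term along a segment -/
noncomputable def EE (a b t : ℝ) : ℝ := -((b - a) * Real.log (2 * Real.sin (a + t * (b - a))))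

lemma term_deriv {a b t : ℝ} (h0 : 0 < a + t * (b - a)) (h1 : a + t * (b - a) < π) :
    HasDerivAt (fun t => -lob (a + t * (b - a))) (EE a b t) t := by
  have h2 : HasDerivAt (fun t : ℝ => a + t * (b - a)) (b - a) t := by
    simpa using ((hasDerivAt_id t).mul_const (b - a)).const_add a
  have := ((lob_deriv h0 h1).comp t h2).neg
  unfold EE
  rw [mul_comm (b - a)]
  exact this

lemma seg_pos {a b t : ℝ} (ha : 0 ≤ a) (hb : 0 < b) (t0 : 0 < t) (t1 : t < 1) :
    0 < a + t * (b - a) := by nlinarith [mul_pos t0 hb, mul_nonneg ha (sub_nonneg.2 t1.le)]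

lemma EE_tendsto {a : ℝ} (b : ℝ) (h0 : 0 < a) (h1 : a < π) :
    Tendsto (EE a b) (𝓝[>] 0) (𝓝 (EE a b 0)) := by
  have hs := Real.sin_pos_of_pos_of_lt_pi h0 h1
  have : ContinuousAt (EE a b) 0 := by
    unfold EE
    refine ContinuousAt.neg (ContinuousAt.mul (by fun_prop) (ContinuousAt.log (by fun_prop) ?_))
    simp; exact hs.ne'
  exact this.tendsto.mono_left nhdsWithin_le_nhds

lemma EE_atTop {b : ℝ} (hb : 0 < b) (hb1 : b < π) : Tendsto (EE 0 b) (𝓝[>] 0) atTop := by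
  have h1 : Tendsto (fun t : ℝ => 2 * Real.sin (0 + t * (b - 0))) (𝓝[>] 0) (𝓝[>] 0) := by
    rw [tendsto_nhdsWithin_iff]
    constructor
    · have : Continuous (fun t : ℝ => 2 * Real.sin (0 + t * (b - 0))) := by fun_prop
      have := this.tendsto 0
      simp only [zero_mul, add_zero, Real.sin_zero, mul_zero] at this
      exact this.mono_left nhdsWithin_le_nhds
    · have : Set.Ioo (0:ℝ) 1 ∈ 𝓝[>] (0:ℝ) := Ioo_mem_nhdsGT one_pos
      filter_upwards [this] with t ht
      have := Real.sin_pos_of_pos_of_lt_pi (x := 0 + t * (b - 0)) (by nlinarith [mul_pos ht.1 hb]) (by nlinarith [ht.2])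
      simp only [Set.mem_Ioi]; positivity
  have h2 := (Real.tendsto_log_nhdsGT_zero).comp h1
  have h3 := tendsto_neg_atBot_atTop.comp (h2.const_mul_atBot (r := b) hb)
  refine h3.congr fun t => ?_
  simp [EE]

lemma EE_double {a b c : ℝ} (ha : 0 < a) (hb : 0 < b) (hs : a + b + c = π) :
    ∀ᶠ t in 𝓝[>] (0:ℝ), 0 < EE 0 a t + EE 0 b t + EE π c t := by
  have hab : 0 < a + b := by positivity
  have : Set.Ioo (0:ℝ) (π / 2 / (a + b)) ∈ 𝓝[>] (0:ℝ) := Ioo_mem_nhdsGT (by positivity)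
  filter_upwards [this] with t ht
  obtain ⟨t0, t1⟩ := ht
  rw [lt_div_iff₀ hab] at t1
  have e : c = π - (a + b) := by linarith
  subst e
  have hta := mul_pos t0 ha
  have htb := mul_pos t0 hb
  have es : Real.sin (π + t * (π - (a + b) - π)) = Real.sin (t * (a + b)) := by
    rw [← Real.sin_pi_sub]; congr 1; ring
  unfold EE
  rw [es]
  simp only [zero_add, sub_zero]
  have key : ∀ d, 0 < d → d < a + b → Real.log (2 * Real.sin (t * d)) < Real.log (2 * Real.sin (t * (a + b))) := by
    intro d hd hd'
    have htd := mul_pos t0 hd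
    have h1 : t * d < t * (a + b) := by nlinarith
    have h2 : 0 < Real.sin (t * d) := Real.sin_pos_of_pos_of_lt_pi htd (by linarith [Real.pi_pos])
    apply Real.log_lt_log (by positivity)
    have := Real.sin_lt_sin_of_lt_of_le_pi_div_two (x := t * d) (y := t * (a + b)) (by linarith [Real.pi_pos]) t1.le h1
    linarith
  have k1 := key a ha (by linarith)
  have k2 := key b hb (by linarith)
  nlinarith [mul_pos ha (sub_pos.2 k1), mul_pos hb (sub_pos.2 k2)]

/-- simple flat data -/
lemma EE_simple {a b c a' b' c' : ℝ} (h : a + b + c = π) (h' : a' + b' + c' = π)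
    (ha : 0 ≤ a) (hb : 0 ≤ b) (hc : 0 ≤ c) (ha' : 0 < a') (hb' : 0 < b') (hc' : 0 < c')
    (hf : a = 0 ∨ b = 0 ∨ c = 0) (hnd : a ≠ π ∧ b ≠ π ∧ c ≠ π) :
    Tendsto (fun t => EE a a' t + EE b b' t + EE c c' t) (𝓝[>] 0) atTop := by
  obtain ⟨n1, n2, n3⟩ := hnd
  have key : ∀ b c a' b' c' : ℝ, b + c = π → a' + b' + c' = π → 0 ≤ b → 0 ≤ c → 0 < a' → 0 < b' → 0 < c' → b ≠ π → c ≠ π →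
    Tendsto (fun t => EE 0 a' t + EE b b' t + EE c c' t) (𝓝[>] 0) atTop := by
    intro b c a' b' c' h h' hb hc ha' hb' hc' n2 n3
    have hb0 : 0 < b := lt_of_le_of_ne hb (fun e => n3 (by linarith))
    have hc0 : 0 < c := lt_of_le_of_ne hc (fun e => n2 (by linarith))
    exact ((EE_atTop ha' (by linarith)).atTop_add (EE_tendsto b' hb0 (by linarith))).atTop_add
      (EE_tendsto c' hc0 (by linarith))
  rcases hf with rfl | rfl | rfl
  · exact key b c a' b' c' (by linarith) h' hb hc ha' hb' hc' n2 n3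
  · refine (key a c b' a' c' (by linarith) (by linarith) ha hc hb' ha' hc' n1 n3).congr fun t => by ring
  · refine (key a b c' a' b' (by linarith) (by linarith) ha hb hc' ha' hb' n1 n2).congr fun t => by ring

lemma EE_doublefl {a b c a' b' c' : ℝ} (h : a + b + c = π) (h' : a' + b' + c' = π)
    (ha : 0 ≤ a) (hb : 0 ≤ b) (hc : 0 ≤ c) (ha' : 0 < a') (hb' : 0 < b') (hc' : 0 < c')
    (hd : a = π ∨ b = π ∨ c = π) :
    ∀ᶠ t in 𝓝[>] (0:ℝ), 0 < EE a a' t + EE b b' t + EE c c' t := by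
  rcases hd with rfl | rfl | rfl
  · obtain rfl : b = 0 := by linarith
    obtain rfl : c = 0 := by linarith
    filter_upwards [EE_double (c := a') hb' hc' (by linarith)] with t ht
    linarith
  · obtain rfl : a = 0 := by linarith
    obtain rfl : c = 0 := by linarith
    filter_upwards [EE_double (c := b') ha' hc' (by linarith)] with t ht
    linarith
  · obtain rfl : a = 0 := by linarith
    obtain rfl : b = 0 := by linarith
    filter_upwards [EE_double (c := c') ha' hb' (by linarith)] with t ht
    linarith

lemma EE_bdd {a b c a' b' c' : ℝ} (h : a + b + c = π) (h' : a' + b' + c' = π)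
    (ha : 0 ≤ a) (hb : 0 ≤ b) (hc : 0 ≤ c) (ha' : 0 < a') (hb' : 0 < b') (hc' : 0 < c') :
    ∃ K : ℝ, ∀ᶠ t in 𝓝[>] (0:ℝ), K < EE a a' t + EE b b' t + EE c c' t := by
  by_cases hd : a = π ∨ b = π ∨ c = π
  · exact ⟨0, EE_doublefl h h' ha hb hc ha' hb' hc' hd⟩
  by_cases hf : a = 0 ∨ b = 0 ∨ c = 0
  · push Not at hd
    exact ⟨0, (EE_simple h h' ha hb hc ha' hb' hc' hf hd).eventually_gt_atTop 0⟩
  push Not at hf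
  have a0 := lt_of_le_of_ne ha hf.1.symm
  have b0 := lt_of_le_of_ne hb hf.2.1.symm
  have c0 := lt_of_le_of_ne hc hf.2.2.symm
  have := ((EE_tendsto a' a0 (by linarith)).add (EE_tendsto b' b0 (by linarith))).add (EE_tendsto c' c0 (by linarith))
  exact ⟨_, this.eventually (lt_mem_nhds (sub_one_lt _))⟩

section comb
variable {m : ℕ} {Ω : ZMod m → Bool} {w u : ZMod m → ℝ}

lemma ang_sum (Ω : ZMod m → Bool) (w : ZMod m → ℝ) (i : ZMod m) :
    xAng Ω w i + yAng Ω w i + zAng w i = π := by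
  unfold xAng yAng zAng
  split_ifs <;> ring

lemma ang_nonneg (hw : w ∈ Pbar m Ω) (i : ZMod m) :
    0 ≤ xAng Ω w i ∧ 0 ≤ yAng Ω w i ∧ 0 ≤ zAng w i := by
  obtain ⟨h1, h2, h3⟩ := hw
  have p := h1 (i - 1)
  have q := h1 i
  have r := h1 (i + 1)
  have h2 := h2 i
  have h3 := h3 i
  unfold IsHinge at h2 h3
  refine ⟨?_, ?_, by unfold zAng; linarith⟩ <;>
  · simp only [xAng, yAng]
    by_cases h : Ω (i - 1) = Ω i
    · have := h2 (by simpa using h)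
      split_ifs <;> linarith
    · have := abs_le.1 (h3 h)
      split_ifs <;> linarith

lemma x_lin (t : ℝ) (i : ZMod m) :
    xAng Ω (fun j => w j + t * (u j - w j)) i = xAng Ω w i + t * (xAng Ω u i - xAng Ω w i) := by
  unfold xAng; split_ifs <;> ring

lemma y_lin (t : ℝ) (i : ZMod m) :
    yAng Ω (fun j => w j + t * (u j - w j)) i = yAng Ω w i + t * (yAng Ω u i - yAng Ω w i) := by
  unfold yAng; split_ifs <;> ring

lemma z_lin (t : ℝ) (i : ZMod m) :
    zAng (fun j => w j + t * (u j - w j)) i = zAng w i + t * (zAng u i - zAng w i) := by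
  unfold zAng; ring

lemma seg_mem (hw : w ∈ Pbar m Ω) (hu : u ∈ Pbar m Ω) {t : ℝ} (t0 : 0 ≤ t) (t1 : t ≤ 1) :
    (fun j => w j + t * (u j - w j)) ∈ Pbar m Ω := by
  obtain ⟨h1, h2, h3⟩ := hw
  obtain ⟨k1, k2, k3⟩ := hu
  have s0 : 0 ≤ 1 - t := by linarith
  refine ⟨fun i => ⟨?_, ?_⟩, fun i hi => ?_, fun i hi => ?_⟩
  · nlinarith [mul_nonneg s0 (h1 i).1, mul_nonneg t0 (k1 i).1]
  · nlinarith [mul_le_mul_of_nonneg_left (h1 i).2 s0, mul_le_mul_of_nonneg_left (k1 i).2 t0]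
  · have := mul_le_mul_of_nonneg_left (h2 i hi) s0
    have := mul_le_mul_of_nonneg_left (k2 i hi) t0
    simp only; linarith
  · have a := abs_le.1 (h3 i hi)
    have b := abs_le.1 (k3 i hi)
    have := mul_le_mul_of_nonneg_left a.1 s0
    have := mul_le_mul_of_nonneg_left b.1 t0
    have := mul_le_mul_of_nonneg_left a.2 s0
    have := mul_le_mul_of_nonneg_left b.2 t0
    simp only
    rw [abs_le]; constructor <;> linarith

lemma core [NeZero m] (hw : w ∈ Pbar m Ω) (hu : u ∈ Pbar m Ω)
    (hpos : ∀ i, 0 < xAng Ω u i ∧ 0 < yAng Ω u i ∧ 0 < zAng u i)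
    (hmax : ∀ w' ∈ Pbar m Ω, totalVol m Ω w' ≤ totalVol m Ω w)
    (hev : ∀ᶠ t in 𝓝[>] (0:ℝ), 0 < ∑ i : ZMod m, (EE (xAng Ω w i) (xAng Ω u i) t +
      EE (yAng Ω w i) (yAng Ω u i) t + EE (zAng w i) (zAng u i) t)) : False := by
  obtain ⟨δ', hδ', hd⟩ := (mem_nhdsGT_iff_exists_Ioo_subset).1 hev
  simp only [Set.mem_Ioi] at hδ'
  obtain ⟨δ, d0, d1, d2⟩ : ∃ δ : ℝ, 0 < δ ∧ δ < 1 ∧ δ < δ' :=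
    ⟨min δ' 1 / 2, by positivity, by linarith [min_le_right δ' 1, lt_min hδ' one_pos],
      by linarith [min_le_left δ' 1, lt_min hδ' one_pos]⟩
  set G : ℝ → ℝ := fun t => ∑ i : ZMod m, (-lob (xAng Ω w i + t * (xAng Ω u i - xAng Ω w i))
    + -lob (yAng Ω w i + t * (yAng Ω u i - yAng Ω w i)) + -lob (zAng w i + t * (zAng u i - zAng w i))) with hG
  have hGV : ∀ t, G t = totalVol m Ω (fun j => w j + t * (u j - w j)) := by
    intro t
    unfold totalVol idealVol
    simp only [x_lin, y_lin, z_lin, hG]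
    exact Finset.sum_congr rfl fun i _ => by ring
  have hder : ∀ t ∈ Set.Ioo (0:ℝ) δ, HasDerivAt G (∑ i : ZMod m, (EE (xAng Ω w i) (xAng Ω u i) t +
      EE (yAng Ω w i) (yAng Ω u i) t + EE (zAng w i) (zAng u i) t)) t := by
    intro t ht
    apply HasDerivAt.fun_sum
    intro i _
    obtain ⟨a, b, c⟩ := ang_nonneg hw i
    obtain ⟨a', b', c'⟩ := hpos i
    have ht1 : t < 1 := ht.2.trans d1
    have A := seg_pos a a' ht.1 ht1
    have B := seg_pos b b' ht.1 ht1
    have C := seg_pos c c' ht.1 ht1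
    have s1 := ang_sum Ω w i
    have s2 := ang_sum Ω u i
    have s : (xAng Ω w i + t * (xAng Ω u i - xAng Ω w i)) + (yAng Ω w i + t * (yAng Ω u i - yAng Ω w i))
      + (zAng w i + t * (zAng u i - zAng w i)) = π := by linear_combination (1 - t) * s1 + t * s2
    exact ((term_deriv A (by linarith)).add (term_deriv B (by linarith))).add (term_deriv C (by linarith))
  have hmono : StrictMonoOn G (Set.Icc 0 δ) := by
    apply strictMonoOn_of_deriv_pos (convex_Icc 0 δ)
    · have := lob_cont
      have : Continuous G := by rw [hG]; fun_prop
      exact this.continuousOn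
    · intro t ht
      rw [interior_Icc] at ht
      rw [(hder t ht).deriv]
      exact hd ⟨ht.1, ht.2.trans d2⟩
  have h1 := hmono (Set.left_mem_Icc.2 d0.le) (Set.right_mem_Icc.2 d0.le) d0
  rw [hGV, hGV] at h1
  have h2 := hmax _ (seg_mem hw hu d0.le d1.le)
  simp only [zero_mul, add_zero] at h1
  exact absurd h1 (not_lt.2 h2)

lemma exists_hinge [NeZero m] (hΩ : ∃ i j, Ω i ≠ Ω j) : ∃ i, IsHinge Ω i := by
  by_contra hc
  push Not at hc
  unfold IsHinge at hc
  push Not at hc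
  have : ∀ n : ℕ, Ω (n : ZMod m) = Ω 0 := by
    intro n
    induction n with
    | zero => simp
    | succ k ih => rw [← ih, ← hc]; simp
  obtain ⟨i, j, h⟩ := hΩ
  have a := this i.val
  have b := this j.val
  rw [ZMod.natCast_zmod_val] at a b
  exact h (a.trans b.symm)

/-- strictly concave bump -/
noncomputable def bump (m : ℕ) (z : ZMod m) : ℝ := (z.val : ℝ) * (m - z.val)

lemma bump_cast [NeZero m] {k : ℕ} (h : k ≤ m) : bump m (k : ZMod m) = k * (m - k) := by
  unfold bump
  rcases h.lt_or_eq with h | h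
  · rw [ZMod.val_natCast_of_lt h]
  · subst h; simp

lemma bump_conc [NeZero m] {z : ZMod m} (hz : z ≠ 0) :
    bump m (z - 1) + bump m (z + 1) = 2 * bump m z - 2 := by
  obtain ⟨k, hk, rfl⟩ : ∃ k : ℕ, k < m ∧ z = (k : ZMod m) := ⟨z.val, ZMod.val_lt z, by simp⟩
  obtain ⟨l, rfl⟩ : ∃ l, k = l + 1 := Nat.exists_eq_succ_of_ne_zero (by rintro rfl; simp at hz)
  have e1 : ((l + 1 : ℕ) : ZMod m) - 1 = (l : ℕ) := by push_cast; ring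
  have e2 : ((l + 1 : ℕ) : ZMod m) + 1 = (l + 2 : ℕ) := by push_cast; ring
  rw [e1, e2, bump_cast (by omega), bump_cast (by omega), bump_cast (by omega)]
  push_cast; ring

lemma bump_bd [NeZero m] (z : ZMod m) : 0 ≤ bump m z ∧ bump m z ≤ (m:ℝ) ^ 2 := by
  unfold bump
  have h : (z.val : ℝ) ≤ m := by exact_mod_cast (ZMod.val_lt z).le
  have h0 : (0:ℝ) ≤ z.val := by positivity
  constructor
  · exact mul_nonneg h0 (by linarith)
  · nlinarith

lemma exists_interior [NeZero m] (hΩ : ∃ i j, Ω i ≠ Ω j) :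
    ∃ u ∈ Pbar m Ω, ∀ i, 0 < xAng Ω u i ∧ 0 < yAng Ω u i ∧ 0 < zAng u i := by
  obtain ⟨i0, h0⟩ := exists_hinge hΩ
  have hm : (0:ℝ) < m := by exact_mod_cast Nat.pos_of_ne_zero (NeZero.ne m)
  set c : ℝ := 1 / (4 * (m:ℝ) ^ 2) with hc
  have c0 : 0 < c := by positivity
  have hcm : c * (m:ℝ) ^ 2 = 1 / 4 := by rw [hc]; field_simp
  set u : ZMod m → ℝ := fun i => 1 + c * bump m (i - i0) with hu
  have b1 : ∀ i, 1 ≤ u i := fun i => by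
    have := mul_nonneg c0.le (bump_bd (i - i0)).1
    simp only [hu]; linarith
  have b2 : ∀ i, u i ≤ 5 / 4 := fun i => by
    have := mul_le_mul_of_nonneg_left (bump_bd (i - i0)).2 c0.le
    simp only [hu]; linarith
  have b3 : ∀ i, ¬ IsHinge Ω i → u (i - 1) + u (i + 1) < 2 * u i := by
    intro i hi
    have hne : i - i0 ≠ 0 := fun e => hi (by rw [sub_eq_zero.1 e]; exact h0)
    have := bump_conc hne
    have e1 : i - 1 - i0 = i - i0 - 1 := by ring
    have e2 : i + 1 - i0 = i - i0 + 1 := by ring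
    simp only [hu, e1, e2]
    nlinarith
  have hpi := Real.pi_gt_three
  refine ⟨u, ⟨fun i => ⟨by linarith [b1 i], by linarith [b2 i]⟩, fun i hi => (b3 i hi).le, fun i hi => ?_⟩, fun i => ?_⟩
  · rw [abs_le]; constructor <;> linarith [b1 i, b1 (i+1), b1 (i-1), b2 i, b2 (i+1), b2 (i-1)]
  · have := b1 i
    have := b1 (i+1)
    have := b1 (i-1)
    have := b2 i
    have := b2 (i+1)
    have := b2 (i-1)
    have b3 := b3 i
    unfold IsHinge at b3
    refine ⟨?_, ?_, by unfold zAng; linarith⟩ <;>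
    · simp only [xAng, yAng]
      by_cases h : Ω (i - 1) = Ω i
      · have := b3 (by simpa using h)
        split_ifs <;> linarith
      · split_ifs <;> linarith

lemma prop_all [NeZero m] (S : ZMod m → Prop) (h : ∀ k, S (k - 1) → S k → S (k + 1)) {i : ZMod m}
    (h0 : S i) (h1 : S (i + 1)) : ∀ j, S j := by
  have : ∀ n : ℕ, S (i + n) ∧ S (i + n + 1) := by
    intro n
    induction n with
    | zero => simpa using ⟨h0, h1⟩
    | succ k ih =>
      have := h (i + k + 1) (by simpa using ih.1) ih.2
      push_cast
      rw [← add_assoc]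
      exact ⟨ih.2, this⟩
  intro j
  have := (this (j - i).val).1
  rw [ZMod.natCast_zmod_val] at this
  simpa using this

lemma nbrs (hw : w ∈ Pbar m Ω) {k : ZMod m}
    (hd : xAng Ω w k = π ∨ yAng Ω w k = π ∨ zAng w k = π) :
    (w k = 0 ∨ w k = π / 2) ∧
    (¬ (IsHinge Ω k ∧ w k = 0) ∨ (w (k - 1) = 0 ∨ w (k - 1) = π / 2) →
      (w (k + 1) = 0 ∨ w (k + 1) = π / 2)) := by
  obtain ⟨h1, h2, h3⟩ := hw
  have p := h1 (k - 1)
  have q := h1 k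
  have r := h1 (k + 1)
  have h2 := h2 k
  have h3 := h3 k
  have hpi := Real.pi_pos
  have hS : w k = 0 ∨ w k = π / 2 := by
    unfold xAng yAng zAng at hd
    unfold IsHinge at h2 h3
    by_cases h : Ω (k - 1) = Ω k
    · have h2 := h2 (by simpa using h)
      rcases hd with hd | hd | hd
      · right; split_ifs at hd <;> linarith
      · right; split_ifs at hd <;> linarith
      · left; linarith
    · have h3 := abs_le.1 (h3 h)
      rcases hd with hd | hd | hd
      · right; split_ifs at hd <;> linarith
      · right; split_ifs at hd <;> linarith
      · left; linarith
  refine ⟨hS, fun hh => ?_⟩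
  by_cases h : Ω (k - 1) = Ω k
  · have h2 := h2 (by simpa [IsHinge] using h)
    rcases hS with hS | hS
    · left; linarith
    · unfold xAng yAng zAng at hd
      rw [if_pos h, if_pos h] at hd
      rcases hd with hd | hd | hd
      · split_ifs at hd
        · right; linarith
        · left; linarith
      · split_ifs at hd
        · left; linarith
        · right; linarith
      · linarith
  · have h3 := abs_le.1 (h3 h)
    rcases hS with hS | hS
    · have hp : w (k - 1) = 0 ∨ w (k - 1) = π / 2 := by
        rcases hh with hh | hh
        · exact absurd ⟨h, hS⟩ hh
        · exact hh
      have : w (k + 1) = w (k - 1) := by linarith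
      rw [this]; exact hp
    · unfold xAng yAng zAng at hd
      rw [if_neg h, if_neg h] at hd
      rcases hd with hd | hd | hd
      · split_ifs at hd
        · left; linarith
        · right; linarith
      · split_ifs at hd
        · right; linarith
        · left; linarith
      · linarith

end comb

theorem flat_layer_is_hinge_with_zero_parameter (m : ℕ) [NeZero m] (Ω : ZMod m → Bool)
    (hΩ : ∃ i j, Ω i ≠ Ω j)
    (w : ZMod m → ℝ) (hw : w ∈ Pbar m Ω)
    (hmax : ∀ w' ∈ Pbar m Ω, totalVol m Ω w' ≤ totalVol m Ω w) :
    ∀ i, (xAng Ω w i = 0 ∨ yAng Ω w i = 0 ∨ zAng w i = 0) →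
      IsHinge Ω i ∧ w i = 0 := by
  obtain ⟨u, hu, hpos⟩ := exists_interior hΩ
  have step1 : ∀ i, (xAng Ω w i = 0 ∨ yAng Ω w i = 0 ∨ zAng w i = 0) →
      (xAng Ω w i = π ∨ yAng Ω w i = π ∨ zAng w i = π) := by
    intro i hf
    by_contra hd
    push Not at hd
    apply core hw hu hpos hmax
    have hbd := fun j => EE_bdd (ang_sum Ω w j) (ang_sum Ω u j) (ang_nonneg hw j).1 (ang_nonneg hw j).2.1
      (ang_nonneg hw j).2.2 (hpos j).1 (hpos j).2.1 (hpos j).2.2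
    choose K hK using hbd
    have hi := EE_simple (ang_sum Ω w i) (ang_sum Ω u i) (ang_nonneg hw i).1 (ang_nonneg hw i).2.1
      (ang_nonneg hw i).2.2 (hpos i).1 (hpos i).2.1 (hpos i).2.2 hf hd
    filter_upwards [eventually_all.2 hK,
      hi.eventually_gt_atTop (-∑ j ∈ Finset.univ.erase i, K j)] with t h1 h2
    rw [← Finset.add_sum_erase _ _ (Finset.mem_univ i)]
    have := Finset.sum_le_sum (s := Finset.univ.erase i) (fun j _ => (h1 j).le)
    linarith
  have step2 : ¬ ∀ i, (xAng Ω w i = π ∨ yAng Ω w i = π ∨ zAng w i = π) := by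
    intro hd
    apply core hw hu hpos hmax
    have hbd := fun j => EE_doublefl (ang_sum Ω w j) (ang_sum Ω u j) (ang_nonneg hw j).1 (ang_nonneg hw j).2.1
      (ang_nonneg hw j).2.2 (hpos j).1 (hpos j).2.1 (hpos j).2.2 (hd j)
    filter_upwards [eventually_all.2 hbd] with t h1
    exact Finset.sum_pos (fun j _ => h1 j) ⟨0, Finset.mem_univ 0⟩
  intro i hf
  by_contra hc
  have hSd : ∀ k, (w k = 0 ∨ w k = π / 2) → (xAng Ω w k = π ∨ yAng Ω w k = π ∨ zAng w k = π) := by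
    intro k hk
    rcases hk with hk | hk
    · right; right; simp [zAng, hk]
    · apply step1; right; right; simp only [zAng, hk]; ring
  apply step2
  intro j
  apply hSd
  obtain ⟨n1, n2⟩ := nbrs hw (step1 i hf)
  exact prop_all (fun k => w k = 0 ∨ w k = π / 2)
    (fun k a b => (nbrs hw (hSd k b)).2 (Or.inr a)) n1 (n2 (Or.inl hc)) j
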